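/- Let j be a nonnegative integer and let m₁, m₂ be integers with m₁ ≤ 0, m₂ ≤ 0 and 2m₁ ≤ m₂. Let N(m₁,m₂;j) = {(x,y,z) ∈ ℚ_p³ : M₁(Y;j) = m₁ and M₂(Y;j) = m₂, where Y = [[x,y],[y,z]]}. Then vol(N(m₁,m₂;j)) ≤ (1 + 2·min(m₂ − 2m₁, −m₂)) · p^{−m₁ − m₂ + j}. -/

import Mathlib

/-!
Write `a = max m₁ m₂`. On `N(m₁, m₂; j)` the two minima give `v x ≥ a - j`, `v y ≥ m₁`, `v z ≥ a`
and `v (x z - y²) ≥ m₂ - j`. Cut this region according to the size of `z`.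

* If `v z ≥ m₂ - a`, the three bounds on `x`, `y`, `z` alone confine the point to a box of volume
  `p^(j - a) p^(-m₁) p^(-(m₂ - a)) = p^(-m₁ - m₂ + j)`.
* If `v z = k` with `a ≤ k < m₂ - a`, then for fixed `y`, `z` the bound on `x z - y²` confines `x`
  to a ball around `y² / z` of volume `p^(j - m₂ + k)`, while `z` ranges over a set of volume at
  most `p^(-k)` and `y` over one of volume `p^(-m₁)`; again the product is `p^(-m₁ - m₂ + j)`.

The second case comprises `m₂ - 2a = min (m₂ - 2 m₁) (-m₂)` values of `k`, so the volume is at most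
`(1 + min (m₂ - 2 m₁) (-m₂)) p^(-m₁ - m₂ + j)`. The measure-theoretic input is
`padicHaar_closedBall` (volumes of balls) and `padicHaar3_le` (a Fubini bound).
-/

open MeasureTheory

noncomputable instance (p : ℕ) [Fact p.Prime] : MeasurableSpace ℚ_[p] := borel ℚ_[p]
instance (p : ℕ) [Fact p.Prime] : BorelSpace ℚ_[p] := ⟨rfl⟩

open scoped Classical in
/-- The additive `p`-adic valuation on `ℚ_[p]`, valued in `ℤ ∪ {∞}`, normalized by
`v p = 1` and `v 0 = ∞`. -/
noncomputable def padicV {p : ℕ} [Fact p.Prime] (x : ℚ_[p]) : WithTop ℤ :=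
  if x = 0 then ⊤ else (x.valuation : WithTop ℤ)

/-- The closed unit ball `ℤ_p` as a positive compact subset of `ℚ_p`. -/
noncomputable def unitBallCompacts (p : ℕ) [Fact p.Prime] :
    TopologicalSpace.PositiveCompacts ℚ_[p] where
  carrier := Metric.closedBall 0 1
  isCompact' := isCompact_closedBall 0 1
  interior_nonempty' := by
    refine ⟨0, ?_⟩
    exact interior_maximal Metric.ball_subset_closedBall Metric.isOpen_ball
      (Metric.mem_ball_self one_pos)

/-- The Haar measure on `ℚ_p` normalized so that `ℤ_p` has volume `1`. -/
noncomputable def padicHaar (p : ℕ) [Fact p.Prime] : Measure ℚ_[p] :=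
  Measure.addHaarMeasure (unitBallCompacts p)

/-- The Haar measure on `ℚ_p³` normalized so that `ℤ_p³` has volume `1`. -/
noncomputable def padicHaar3 (p : ℕ) [Fact p.Prime] : Measure (ℚ_[p] × ℚ_[p] × ℚ_[p]) :=
  (padicHaar p).prod ((padicHaar p).prod (padicHaar p))

/-- `M₁(Y; j) = min {0, v x + j, v y, v z}` for `Y = [[x, y], [y, z]]`. -/
noncomputable def M1 {p : ℕ} [Fact p.Prime] (j : ℕ) (x y z : ℚ_[p]) : WithTop ℤ :=
  min (min 0 (padicV x + (j : ℤ))) (min (padicV y) (padicV z))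

/-- `M₂(Y; j) = min {0, j + v (xz - y²), j + v x, j + v y, v z}` for `Y = [[x, y], [y, z]]`. -/
noncomputable def M2 {p : ℕ} [Fact p.Prime] (j : ℕ) (x y z : ℚ_[p]) : WithTop ℤ :=
  min (min 0 ((j : ℤ) + padicV (x * z - y ^ 2)))
    (min (min ((j : ℤ) + padicV x) ((j : ℤ) + padicV y)) (padicV z))

section Helpers

variable {p : ℕ} [hp : Fact p.Prime]

instance : (padicHaar p).IsAddHaarMeasure := by
  unfold padicHaar; infer_instance

lemma one_lt_p_real : (1 : ℝ) < p := by exact_mod_cast hp.out.one_lt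

lemma p_real_pos : (0 : ℝ) < p := zero_lt_one.trans one_lt_p_real

lemma padicHaar_unit : padicHaar p (Metric.closedBall 0 1) = 1 :=
  Measure.addHaarMeasure_self (K₀ := unitBallCompacts p)

lemma padicHaar_closedBall_center (c : ℚ_[p]) (r : ℝ) :
    padicHaar p (Metric.closedBall c r) = padicHaar p (Metric.closedBall 0 r) := by
  have : Metric.closedBall (0 : ℚ_[p]) r = (fun x => c + x) ⁻¹' Metric.closedBall c r := by
    ext x; simp
  rw [this, measure_preimage_add]

/-- Proved by splitting: a ball of radius `p^(n+1)` is the disjoint union of the `p` balls of radius `p^n` around the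
points `i p^(-(n+1))`, `0 ≤ i < p`. -/
lemma padicHaar_closedBall_succ (n : ℤ) :
    padicHaar p (Metric.closedBall 0 ((p : ℝ) ^ (n + 1))) =
      p * padicHaar p (Metric.closedBall 0 ((p : ℝ) ^ n)) := by
  have hp0 : (p : ℚ_[p]) ≠ 0 := by exact_mod_cast hp.out.ne_zero
  set t : ℚ_[p] := (p : ℚ_[p]) ^ (-(n + 1)) with ht
  have ht0 : t ≠ 0 := zpow_ne_zero _ hp0
  have htn : ‖t‖ = (p : ℝ) ^ (n + 1) := by rw [ht, Padic.norm_p_zpow, neg_neg]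
  have hpn : (p : ℝ) ^ n = (p : ℝ) ^ (n + 1) * (p : ℝ) ^ (-1 : ℤ) := by
    rw [← zpow_add₀ p_real_pos.ne']; congr 1; ring
  have hpos : 0 < (p : ℝ) ^ (n + 1) := zpow_pos p_real_pos _
  -- membership in a small ball, rescaled to the unit ball
  have key : ∀ (x : ℚ_[p]) (i : ℕ),
      x ∈ Metric.closedBall ((i : ℚ_[p]) * t) ((p : ℝ) ^ n) ↔ ‖x / t - (i : ℚ_[p])‖ < 1 := by
    intro x i
    have h1 : x - (i : ℚ_[p]) * t = t * (x / t - (i : ℚ_[p])) := by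
      rw [mul_sub, mul_div_cancel₀ x ht0, mul_comm t]
    rw [Metric.mem_closedBall, dist_eq_norm, h1, norm_mul, htn, hpn, mul_le_mul_iff_right₀ hpos]
    have := Padic.norm_le_pow_iff_norm_lt_pow_add_one (x / t - (i : ℚ_[p])) (-1)
    simpa using this
  have hU : Metric.closedBall (0 : ℚ_[p]) ((p : ℝ) ^ (n + 1)) =
      ⋃ i ∈ Finset.range p, Metric.closedBall ((i : ℚ_[p]) * t) ((p : ℝ) ^ n) := by
    ext x
    simp only [Set.mem_iUnion, key, Finset.mem_range, exists_prop]
    rw [mem_closedBall_zero_iff, ← htn, ← div_le_one (norm_pos_iff.2 ht0), ← norm_div]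
    constructor
    · intro hx
      obtain ⟨w, hw⟩ : ∃ w : ℤ_[p], (w : ℚ_[p]) = x / t := ⟨⟨x / t, hx⟩, rfl⟩
      obtain ⟨i, hi, h⟩ := PadicInt.exists_mem_range w
      refine ⟨i, hi, ?_⟩
      rw [IsLocalRing.mem_maximalIdeal, PadicInt.mem_nonunits] at h
      rwa [PadicInt.norm_def, PadicInt.coe_sub, PadicInt.coe_natCast, hw] at h
    · rintro ⟨i, -, h⟩
      have := Padic.nonarchimedean (x / t - (i : ℚ_[p])) (i : ℚ_[p])
      rw [sub_add_cancel] at this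
      exact this.trans (max_le h.le (by simpa using Padic.norm_int_le_one (p := p) (i : ℤ)))
  have hd : Set.PairwiseDisjoint (↑(Finset.range p))
      (fun i : ℕ => Metric.closedBall ((i : ℚ_[p]) * t) ((p : ℝ) ^ n)) := by
    intro i hi k hk hik
    refine Set.disjoint_left.2 fun x hxi hxk => hik ?_
    rw [key] at hxi hxk
    have h1 : ‖(((i : ℤ) - (k : ℤ) : ℤ) : ℚ_[p])‖ < 1 := by
      have h2 := Padic.nonarchimedean (x / t - (k : ℚ_[p])) (-(x / t - (i : ℚ_[p])))
      rw [norm_neg] at h2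
      have h3 : x / t - (k : ℚ_[p]) + -(x / t - (i : ℚ_[p])) = (((i : ℤ) - (k : ℤ) : ℤ) : ℚ_[p]) := by
        push_cast; ring
      rw [h3] at h2
      exact h2.trans_lt (max_lt hxk hxi)
    rw [Padic.norm_intCast_lt_one_iff] at h1
    have hi' := Finset.mem_range.1 hi
    have hk' := Finset.mem_range.1 hk
    have h4 := Int.eq_zero_of_abs_lt_dvd h1 (by rw [abs_lt]; constructor <;> omega)
    omega
  rw [hU, measure_biUnion_finset hd fun i _ => Metric.isClosed_closedBall.measurableSet]
  simp only [padicHaar_closedBall_center (_ * t), Finset.sum_const, Finset.card_range,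
    nsmul_eq_mul]

lemma padicHaar_closedBall (c : ℚ_[p]) (n : ℤ) :
    padicHaar p (Metric.closedBall c ((p : ℝ) ^ n)) = ENNReal.ofReal ((p : ℝ) ^ n) := by
  rw [padicHaar_closedBall_center]
  have hstep : ∀ n : ℤ, ENNReal.ofReal ((p : ℝ) ^ (n + 1)) =
      p * ENNReal.ofReal ((p : ℝ) ^ n) := by
    intro n
    rw [zpow_add_one₀ p_real_pos.ne', mul_comm, ENNReal.ofReal_mul p_real_pos.le,
      ENNReal.ofReal_natCast]
  induction n using Int.induction_on with
  | zero => simpa using padicHaar_unit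
  | succ n ih => rw [padicHaar_closedBall_succ, hstep, ih]
  | pred n ih =>
    rw [← sub_add_cancel (-(n : ℤ)) 1, padicHaar_closedBall_succ, hstep] at ih
    exact (ENNReal.mul_right_inj (by exact_mod_cast hp.out.ne_zero)
      (ENNReal.natCast_ne_top p)).1 ih

/-- Fubini bound: integrate the volume of the `x`-fibres over a box of pairs `(y, z)`. -/
lemma padicHaar3_le {S : Set (ℚ_[p] × ℚ_[p] × ℚ_[p])} (hS : MeasurableSet S) (α β γ : ℤ)
    (hbox : ∀ w ∈ S, ‖w.2.1‖ ≤ (p : ℝ) ^ β ∧ ‖w.2.2‖ ≤ (p : ℝ) ^ γ)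
    (hfib : ∀ u : ℚ_[p] × ℚ_[p], ∃ c : ℚ_[p],
      (fun x => (x, u)) ⁻¹' S ⊆ Metric.closedBall c ((p : ℝ) ^ α)) :
    padicHaar3 p S ≤ ENNReal.ofReal ((p : ℝ) ^ (α + β + γ)) := by
  set B : Set (ℚ_[p] × ℚ_[p]) :=
    Metric.closedBall 0 ((p : ℝ) ^ β) ×ˢ Metric.closedBall 0 ((p : ℝ) ^ γ) with hB
  have hBm : MeasurableSet B :=
    Metric.isClosed_closedBall.measurableSet.prod Metric.isClosed_closedBall.measurableSet
  have hle : ∀ u, padicHaar p ((fun x => (x, u)) ⁻¹' S) ≤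
      B.indicator (fun _ => ENNReal.ofReal ((p : ℝ) ^ α)) u := by
    intro u
    by_cases hu : u ∈ B
    · obtain ⟨c, hc⟩ := hfib u
      rw [Set.indicator_of_mem hu, ← padicHaar_closedBall c α]
      exact measure_mono hc
    · have : (fun x => (x, u)) ⁻¹' S = ∅ := by
        refine Set.eq_empty_of_forall_notMem fun x hx => hu ?_
        have := hbox _ hx
        simpa [hB, Set.mem_prod] using this
      simp [this]
  unfold padicHaar3
  rw [Measure.prod_apply_symm hS]
  refine (lintegral_mono hle).trans ?_
  rw [lintegral_indicator_const hBm, hB, Measure.prod_prod, padicHaar_closedBall,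
    padicHaar_closedBall, ← ENNReal.ofReal_mul (by positivity), ← ENNReal.ofReal_mul (by positivity),
    ← zpow_add₀ p_real_pos.ne', ← zpow_add₀ p_real_pos.ne', add_assoc]

lemma norm_le_of_le_padicV {x : ℚ_[p]} {m : ℤ} (h : (m : WithTop ℤ) ≤ padicV x) :
    ‖x‖ ≤ (p : ℝ) ^ (-m) := by
  unfold padicV at h
  split_ifs at h with hx
  · rw [hx, norm_zero]; exact (zpow_pos p_real_pos _).le
  · rw [Padic.norm_eq_zpow_neg_valuation hx]
    exact zpow_le_zpow_right₀ one_lt_p_real.le (neg_le_neg (WithTop.coe_le_coe.1 h))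

lemma norm_le_of_le_add_padicV {x : ℚ_[p]} {m : ℤ} {j : ℕ}
    (h : (m : WithTop ℤ) ≤ ((j : ℤ) : WithTop ℤ) + padicV x) :
    ‖x‖ ≤ (p : ℝ) ^ ((j : ℤ) - m) := by
  rw [← neg_sub]
  refine norm_le_of_le_padicV ?_
  unfold padicV at h ⊢
  split_ifs at h ⊢ with hx
  · exact le_top
  · rw [← WithTop.coe_add, WithTop.coe_le_coe] at h
    exact WithTop.coe_le_coe.2 (by omega)

/-- The part of the region where `v z` is large, a box. -/
def boxPart (p : ℕ) [Fact p.Prime] (α β γ : ℤ) : Set (ℚ_[p] × ℚ_[p] × ℚ_[p]) :=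
  {w | ‖w.1‖ ≤ (p : ℝ) ^ α ∧ ‖w.2.1‖ ≤ (p : ℝ) ^ β ∧ ‖w.2.2‖ ≤ (p : ℝ) ^ γ}

/-- The part of the region where `v z = k`, on which `x` is close to `y² / z`. -/
def shellPart (p : ℕ) [Fact p.Prime] (δ β k : ℤ) : Set (ℚ_[p] × ℚ_[p] × ℚ_[p]) :=
  {w | ‖w.1 * w.2.2 - w.2.1 ^ 2‖ ≤ (p : ℝ) ^ δ ∧ ‖w.2.1‖ ≤ (p : ℝ) ^ β ∧
    ‖w.2.2‖ = (p : ℝ) ^ (-k)}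

lemma padicHaar3_boxPart_le (α β γ : ℤ) :
    padicHaar3 p (boxPart p α β γ) ≤ ENNReal.ofReal ((p : ℝ) ^ (α + β + γ)) := by
  refine padicHaar3_le ?_ α β γ (fun w hw => hw.2) fun u => ⟨0, fun x hx => ?_⟩
  · simp only [boxPart, Set.ofPred_and]
    refine IsClosed.measurableSet (IsClosed.inter ?_ (IsClosed.inter ?_ ?_))
    · exact isClosed_le (by fun_prop) (by fun_prop)
    · exact isClosed_le (by fun_prop) (by fun_prop)
    · exact isClosed_le (by fun_prop) (by fun_prop)
  · exact mem_closedBall_zero_iff.2 hx.1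

lemma padicHaar3_shellPart_le (δ β k : ℤ) :
    padicHaar3 p (shellPart p δ β k) ≤ ENNReal.ofReal ((p : ℝ) ^ (δ + β)) := by
  have : δ + β = (δ + k) + β + -k := by ring
  rw [this]
  refine padicHaar3_le ?_ (δ + k) β (-k) (fun w hw => ⟨hw.2.1, hw.2.2.le⟩)
    fun u => ⟨u.1 ^ 2 / u.2, fun x hx => ?_⟩
  · simp only [shellPart, Set.ofPred_and]
    refine IsClosed.measurableSet (IsClosed.inter ?_ (IsClosed.inter ?_ ?_))
    · exact isClosed_le (by fun_prop) (by fun_prop)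
    · exact isClosed_le (by fun_prop) (by fun_prop)
    · exact isClosed_eq (by fun_prop) (by fun_prop)
  · obtain ⟨h1, -, h3⟩ := hx
    simp only at h1 h3
    have hpos : 0 < (p : ℝ) ^ (-k) := zpow_pos p_real_pos _
    have hz : u.2 ≠ 0 := by rw [← norm_pos_iff, h3]; exact hpos
    have h4 : x - u.1 ^ 2 / u.2 = (x * u.2 - u.1 ^ 2) / u.2 := by field_simp
    rw [Metric.mem_closedBall, dist_eq_norm, h4, norm_div, h3, div_le_iff₀ hpos,
      ← zpow_add₀ p_real_pos.ne', add_neg_cancel_right]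
    exact h1

end Helpers

/-- For `j ≥ 0` and integers `m₁ ≤ 0`, `m₂ ≤ 0` with `2 m₁ ≤ m₂`, the volume
of `N(m₁, m₂; j) = {(x,y,z) : M₁(Y; j) = m₁, M₂(Y; j) = m₂}` is at most
`(1 + 2 min(m₂ - 2 m₁, -m₂)) p^(-m₁ - m₂ + j)`. -/
theorem volume_N_le (p : ℕ) [Fact p.Prime] (j : ℕ) (m₁ m₂ : ℤ)
    (hm₁ : m₁ ≤ 0) (hm₂ : m₂ ≤ 0) (h : 2 * m₁ ≤ m₂) :
    padicHaar3 p {w : ℚ_[p] × ℚ_[p] × ℚ_[p] |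
        M1 j w.1 w.2.1 w.2.2 = (m₁ : WithTop ℤ) ∧ M2 j w.1 w.2.1 w.2.2 = (m₂ : WithTop ℤ)} ≤
      ENNReal.ofReal ((1 + 2 * (min (m₂ - 2 * m₁) (-m₂) : ℤ)) *
        (p : ℝ) ^ (-(m₁ : ℝ) - (m₂ : ℝ) + (j : ℝ))) := by
  set a : ℤ := max m₁ m₂ with ha
  set L : ℤ := min (m₂ - 2 * m₁) (-m₂) with hL
  have hLa : L = m₂ - 2 * a := by omega
  have hL0 : 0 ≤ L := by omega
  have hsub : {w : ℚ_[p] × ℚ_[p] × ℚ_[p] |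
        M1 j w.1 w.2.1 w.2.2 = (m₁ : WithTop ℤ) ∧ M2 j w.1 w.2.1 w.2.2 = (m₂ : WithTop ℤ)} ⊆
      boxPart p (j - a) (-m₁) (-(m₂ - a)) ∪
        ⋃ k ∈ Finset.Ico a (m₂ - a), shellPart p (j - m₂) (-m₁) k := by
    rintro ⟨x, y, z⟩ ⟨h1, h2⟩
    have h1 := h1.ge
    have h2 := h2.ge
    simp only [M1, M2, le_min_iff] at h1 h2
    obtain ⟨⟨-, hx1⟩, hy1, hz1⟩ := h1
    obtain ⟨⟨-, hd⟩, ⟨hx2, -⟩, hz2⟩ := h2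
    rw [add_comm] at hx1
    have hxa : ‖x‖ ≤ (p : ℝ) ^ ((j : ℤ) - a) :=
      norm_le_of_le_add_padicV (by rcases max_choice m₁ m₂ with h | h <;> rw [ha, h] <;> assumption)
    have hza : (a : WithTop ℤ) ≤ padicV z := by
      rcases max_choice m₁ m₂ with h | h <;> rw [ha, h] <;> assumption
    have hy := norm_le_of_le_padicV hy1
    by_cases hz : ((m₂ - a : ℤ) : WithTop ℤ) ≤ padicV z
    · exact Or.inl ⟨hxa, hy, norm_le_of_le_padicV hz⟩
    · right
      unfold padicV at hz hza
      split_ifs at hz hza with hz0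
      · exact absurd le_top hz
      · rw [WithTop.coe_le_coe] at hz hza
        refine Set.mem_biUnion (x := z.valuation) (Finset.mem_Ico.2 ⟨hza, not_le.1 hz⟩) ?_
        exact ⟨norm_le_of_le_add_padicV hd, hy, Padic.norm_eq_zpow_neg_valuation hz0⟩
  set C : ℝ := (p : ℝ) ^ ((j : ℤ) - m₂ + -m₁) with hC
  have hC0 : 0 ≤ C := (zpow_pos p_real_pos _).le
  have hrpow : (p : ℝ) ^ (-(m₁ : ℝ) - (m₂ : ℝ) + (j : ℝ)) = C := by
    rw [hC, ← Real.rpow_intCast]; congr 1; push_cast; ring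
  have hcard : (((Finset.Ico a (m₂ - a)).card : ℕ) : ℝ) = (L : ℝ) := by
    rw [Int.card_Ico, show m₂ - a - a = L by omega]
    exact_mod_cast Int.toNat_of_nonneg hL0
  have hbox : padicHaar3 p (boxPart p (j - a) (-m₁) (-(m₂ - a))) ≤ ENNReal.ofReal C := by
    have := padicHaar3_boxPart_le (p := p) (j - a) (-m₁) (-(m₂ - a))
    rwa [show (j : ℤ) - a + -m₁ + -(m₂ - a) = (j : ℤ) - m₂ + -m₁ by ring] at this
  have hshell : padicHaar3 p (⋃ k ∈ Finset.Ico a (m₂ - a), shellPart p (j - m₂) (-m₁) k) ≤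
      ENNReal.ofReal (L * C) := by
    refine (measure_biUnion_finset_le _ _).trans
      ((Finset.sum_le_card_nsmul _ _ _ fun k _ => padicHaar3_shellPart_le _ _ k).trans ?_)
    rw [nsmul_eq_mul, ← hcard, ENNReal.ofReal_mul (Nat.cast_nonneg _), ENNReal.ofReal_natCast]
  have hLr : (0 : ℝ) ≤ L := by exact_mod_cast hL0
  rw [hrpow]
  calc _ ≤ _ := measure_mono hsub
    _ ≤ _ := measure_union_le _ _
    _ ≤ ENNReal.ofReal C + ENNReal.ofReal (L * C) := add_le_add hbox hshell
    _ = ENNReal.ofReal (C + L * C) := (ENNReal.ofReal_add hC0 (by positivity)).symm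
    _ ≤ _ := ENNReal.ofReal_le_ofReal (by nlinarith [mul_nonneg hLr hC0])
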